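/- arXiv:2211.06521 — 4 statements merged into one kernel-verified Lean document; each statement's English description precedes it below -/
import Mathlib

section
/- Let k ≥ 1 and let G be a multigraph with n ≥ 1 vertices and m edges such that every maximal k-edge-connected subgraph of G is trivial, i.e., consists of a single vertex. Then m ≤ (k−1)(n−1). -/
universe u

structure Multigraph (V : Type u) where
  edges : Multiset (Sym2 V)
  loopless : ∀ e ∈ edges, ¬ e.IsDiag

namespace Multigraph

variable {V : Type u}

/-- Reachability via the edges of a multiset of (undirected) edges. -/
def MReach (F : Multiset (Sym2 V)) : V → V → Prop :=
  Relation.ReflTransGen (fun x y => s(x, y) ∈ F)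

/-- Reachability in a multigraph. -/
def Reachable (G : Multigraph V) : V → V → Prop := MReach G.edges

open Classical in
/-- Delete a multiset of edges. -/
noncomputable def deleteEdges (G : Multigraph V) (F : Multiset (Sym2 V)) : Multigraph V :=
  ⟨G.edges - F, fun e he => G.loopless e (Multiset.mem_of_le (tsub_le_self) he)⟩

/-- `lam G x y` : the minimum number of edges whose deletion disconnects `x` from `y`
(`⊤` if no set of edges disconnects them, e.g. when `x = y`). -/
noncomputable def lam (G : Multigraph V) (x y : V) : ℕ∞ :=
  sInf {n : ℕ∞ | ∃ F : Multiset (Sym2 V), F ≤ G.edges ∧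
      ¬ (G.deleteEdges F).Reachable x y ∧ n = (Multiset.card F : ℕ∞)}

open Classical in
/-- The multigraph with edge multiset `F`, discarding self-loops. -/
noncomputable def ofEdges (F : Multiset (Sym2 V)) : Multigraph V :=
  ⟨F.filter (fun e => ¬ e.IsDiag), fun e he => (Multiset.mem_filter.mp he).2⟩

open Classical in
/-- The subgraph of `G` induced by the vertex set `S`. -/
noncomputable def induce (G : Multigraph V) (S : Set V) : Multigraph V :=
  ⟨G.edges.filter (fun e => ∀ v ∈ e, v ∈ S), fun e he =>
      G.loopless e (Multiset.mem_filter.mp he).1⟩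

/-- The induced subgraph `G[S]` is `k`-edge-connected. -/
def IsKEdgeConnectedSet (G : Multigraph V) (k : ℕ) (S : Set V) : Prop :=
  S.Nonempty ∧ ∀ x ∈ S, ∀ y ∈ S, (k : ℕ∞) ≤ (G.induce S).lam x y

/-- `G[S]` is a maximal `k`-edge-connected subgraph of `G`. -/
def IsMaxKEdgeConnectedSubgraph (G : Multigraph V) (k : ℕ) (S : Set V) : Prop :=
  G.IsKEdgeConnectedSet k S ∧
    ∀ T : Set V, S ⊆ T → G.IsKEdgeConnectedSet k T → T = S


end Multigraph

/-!
If `S` has two vertices and `G[S]` is not `k`-edge-connected, then deleting fewer than `k` edges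
separates some `x ∈ S` from some `y ∈ S`, and the component of `x` splits `S` into two nonempty
parts with at most `k - 1` edges between them. Splitting recursively until only single vertices
remain takes `|S| - 1` splits, and each edge is lost in exactly one of them.
-/

namespace Multigraph

variable {V : Type u} {G : Multigraph V} {k : ℕ} {S : Set V} {x y u v : V}

open Classical in
theorem mem_edges_induce {e : Sym2 V} :
    e ∈ (G.induce S).edges ↔ e ∈ G.edges ∧ ∀ v ∈ e, v ∈ S :=
  Multiset.mem_filter

open Classical in
theorem edges_induce_univ : (G.induce Set.univ).edges = G.edges :=
  Multiset.filter_eq_self.mpr fun _ _ _ _ => Set.mem_univ _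

theorem edges_induce_induce {T : Set V} :
    ((G.induce S).induce T).edges = (G.induce (S ∩ T)).edges := by
  classical
  simp only [induce, Multiset.filter_filter]
  exact Multiset.filter_congr fun e _ => by simp only [Set.mem_inter_iff, forall_and, and_comm]

theorem edges_induce_eq_zero (hS : S.Subsingleton) : (G.induce S).edges = 0 := by
  refine Multiset.eq_zero_of_forall_notMem fun e he => (G.induce S).loopless e he ?_
  induction e with
  | _ a b =>
    have hends := (mem_edges_induce.mp he).2
    exact hS (hends a (Sym2.mem_mk_left a b)) (hends b (Sym2.mem_mk_right a b))

theorem Reachable.trans_edge (hu : G.Reachable x u) (huv : s(u, v) ∈ G.edges) :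
    G.Reachable x v :=
  Relation.ReflTransGen.tail hu huv

open Classical in
/-- The edge boundary (cut) of a vertex set `A`: the edges, with multiplicity, that have one end
in `A` and the other outside `A`. -/
noncomputable def edgeBoundary (G : Multigraph V) (A : Set V) : Multiset (Sym2 V) :=
  G.edges.filter fun e => (∃ v ∈ e, v ∈ A) ∧ ∃ v ∈ e, v ∉ A

theorem card_edges_eq_add_edgeBoundary (G : Multigraph V) (A : Set V) :
    G.edges.card =
      (G.induce A).edges.card + (G.induce Aᶜ).edges.card + (G.edgeBoundary A).card := by
  classical
  set rest := G.edges.filter fun e => ¬ ∀ v ∈ e, v ∈ A with hrest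
  have hin : (G.induce A).edges + rest = G.edges := Multiset.filter_add_not _ _
  have hout : rest.filter (fun e => ∀ v ∈ e, v ∈ Aᶜ) = (G.induce Aᶜ).edges := by
    rw [hrest, Multiset.filter_filter, induce]
    refine Multiset.filter_congr fun e _ => and_iff_left_of_imp fun houtside hinside => ?_
    exact houtside _ e.out_fst_mem (hinside _ e.out_fst_mem)
  have hcross : rest.filter (fun e => ¬ ∀ v ∈ e, v ∈ Aᶜ) = G.edgeBoundary A := by
    rw [hrest, Multiset.filter_filter, edgeBoundary]
    refine Multiset.filter_congr fun e _ => ?_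
    simp only [Set.mem_compl_iff, not_forall, not_not, exists_prop]
  rw [add_assoc, ← Multiset.card_add, ← Multiset.card_add, ← hout, ← hcross,
    Multiset.filter_add_not, hin]

open Classical in
theorem edgeBoundary_setOf_reachable (G : Multigraph V) (x : V) :
    G.edgeBoundary {v | G.Reachable x v} = 0 := by
  refine Multiset.filter_eq_nil.mpr ?_
  rintro e he ⟨⟨u, hue, hu⟩, v, hve, hv⟩
  have huv : u ≠ v := fun h => hv (h ▸ hu)
  rw [(Sym2.mem_and_mem_iff huv).mp ⟨hue, hve⟩] at he
  exact hv (hu.trans_edge he)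

theorem edgeBoundary_le_of_deleteEdges {F : Multiset (Sym2 V)} {A : Set V} (hF : F ≤ G.edges)
    (hA : (G.deleteEdges F).edgeBoundary A = 0) : G.edgeBoundary A ≤ F := by
  classical
  rw [edgeBoundary, deleteEdges] at hA
  rw [edgeBoundary, ← tsub_add_cancel_of_le hF, Multiset.filter_add, hA, zero_add]
  exact Multiset.filter_le _ _

theorem exists_card_edgeBoundary_lt_of_lam_lt {n : ℕ∞} (h : G.lam x y < n) :
    ∃ A : Set V, x ∈ A ∧ y ∉ A ∧ ((G.edgeBoundary A).card : ℕ∞) < n := by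
  obtain ⟨_, ⟨F, hF, hxy, rfl⟩, hFn⟩ := sInf_lt_iff.mp h
  refine ⟨{v | (G.deleteEdges F).Reachable x v}, Relation.ReflTransGen.refl, hxy, ?_⟩
  have hle := edgeBoundary_le_of_deleteEdges hF (edgeBoundary_setOf_reachable _ x)
  exact lt_of_le_of_lt (Nat.cast_le.mpr (Multiset.card_le_card hle)) hFn

theorem exists_split_of_not_isKEdgeConnectedSet (hS : S.Nonempty)
    (hnot : ¬ G.IsKEdgeConnectedSet k S) :
    ∃ A : Set V, (S ∩ A).Nonempty ∧ (S \ A).Nonempty ∧ (G.induce S).edges.card <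
      (G.induce (S ∩ A)).edges.card + (G.induce (S \ A)).edges.card + k := by
  obtain ⟨x, hx, y, hy, hlam⟩ : ∃ x ∈ S, ∃ y ∈ S, (G.induce S).lam x y < k := by
    by_contra! hall
    exact hnot ⟨hS, hall⟩
  obtain ⟨A, hxA, hyA, hcut⟩ := exists_card_edgeBoundary_lt_of_lam_lt hlam
  refine ⟨A, ⟨x, hx, hxA⟩, ⟨y, hy, hyA⟩, ?_⟩
  rw [card_edges_eq_add_edgeBoundary (G.induce S) A, edges_induce_induce, edges_induce_induce,
    ← Set.sdiff_eq]
  exact Nat.add_lt_add_left (Nat.cast_lt.mp hcut) _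

theorem card_edges_induce_le (hS : S.Finite)
    (h : ∀ T ⊆ S, G.IsKEdgeConnectedSet k T → T.Subsingleton) :
    (G.induce S).edges.card ≤ (k - 1) * (S.ncard - 1) := by
  induction hn : S.ncard using Nat.strong_induction_on generalizing S with
  | _ n ih =>
    subst hn
    obtain hsub | hnontriv := S.subsingleton_or_nontrivial
    · simp only [edges_induce_eq_zero hsub, Multiset.card_zero, zero_le]
    obtain ⟨A, hin, hout, hlt⟩ := exists_split_of_not_isKEdgeConnectedSet hnontriv.nonempty
      fun hconn => Set.not_subsingleton_iff.mpr hnontriv (h S subset_rfl hconn)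
    have hfin : (S ∩ A).Finite := hS.subset Set.inter_subset_left
    have hfout : (S \ A).Finite := hS.subset Set.sdiff_subset
    have hcard := Set.ncard_inter_add_ncard_sdiff_eq_ncard S A hS
    have hin_pos := (Set.ncard_pos hfin).mpr hin
    have hout_pos := (Set.ncard_pos hfout).mpr hout
    have hin_le := ih _ (by omega) hfin (fun T hT => h T (hT.trans Set.inter_subset_left)) rfl
    have hout_le := ih _ (by omega) hfout (fun T hT => h T (hT.trans Set.sdiff_subset)) rfl
    calc (G.induce S).edges.card
        ≤ (k - 1) * ((S ∩ A).ncard - 1) + (k - 1) * ((S \ A).ncard - 1) + (k - 1) := by omega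
      _ = (k - 1) * (((S ∩ A).ncard - 1) + ((S \ A).ncard - 1) + 1) := by ring
      _ = (k - 1) * (S.ncard - 1) := by congr 1; omega

theorem IsKEdgeConnectedSet.exists_isMaxKEdgeConnectedSubgraph_superset [Finite V]
    (hS : G.IsKEdgeConnectedSet k S) : ∃ T ⊇ S, G.IsMaxKEdgeConnectedSubgraph k T := by
  obtain ⟨T, hST, hT⟩ := (Set.toFinite {T | G.IsKEdgeConnectedSet k T}).exists_le_maximal hS
  exact ⟨T, hST, hT.prop, fun U hTU hU => (hT.eq_of_le hU hTU).symm⟩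

end Multigraph

theorem all_max_kec_trivial_edge_bound {V : Type u} [Fintype V]
    (k : ℕ) (hk : 1 ≤ k) (G : Multigraph V) (hn : 1 ≤ Fintype.card V)
    (htriv : ∀ S : Set V, G.IsMaxKEdgeConnectedSubgraph k S → ∃ v : V, S = {v}) :
    Multiset.card G.edges ≤ (k - 1) * (Fintype.card V - 1) := by
  have hsub : ∀ S ⊆ Set.univ, G.IsKEdgeConnectedSet k S → S.Subsingleton := by
    intro S _ hS
    obtain ⟨T, hST, hT⟩ := hS.exists_isMaxKEdgeConnectedSubgraph_superset
    obtain ⟨v, rfl⟩ := htriv T hT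
    exact Set.subsingleton_singleton.anti hST
  simpa only [Multigraph.edges_induce_univ, Set.ncard_univ, Nat.card_eq_fintype_card] using
    Multigraph.card_edges_induce_le Set.finite_univ hsub
end

section
/- Let k ≥ 3, let V be a set of n vertices, and let G_0 = (V, ∅) be the empty multigraph on V. Let e_1, …, e_m be any sequence of edges joining vertices of V (repetitions allowed), and for i = 1, …, m let G_i = (V, {e_1, …, e_i}) be the multigraph with edge multiset {e_1, …, e_i}. Then the number of indices i ∈ {1, …, m} such that the two endpoints of e_i lie in two different maximal k-edge-connected subgraphs of G_{i−1} is at most k(n − 1). -/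
universe u

namespace Multigraph

variable {V : Type u}

/-- The multigraph on `V` consisting of the first `i` edges of the sequence `e`. -/
noncomputable def graphOfPrefix {m : ℕ} (e : Fin m → Sym2 V) (i : ℕ) : Multigraph V :=
  ofEdges (((List.ofFn e).take i : List (Sym2 V)) : Multiset (Sym2 V))

end Multigraph

/-!
Let `H` consist of the inserted edges that join two different maximal `k`-edge-connected subgraphs.
If some nontrivial `H[S]` were `(k + 1)`-edge-connected, let `e i` be its last edge: `H[S]` minus
`e i` is `k`-edge-connected and was present before `e i` arrived, so both endpoints of `e i` already
lay in one maximal `k`-edge-connected subgraph. Hence every nontrivial `H[S]` has a cut with at most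
`k` edges, and cutting repeatedly down to single vertices takes `n - 1` cuts, which together contain
every edge of `H`.
-/

namespace Multigraph

section EdgeConnectivity

variable {V : Type u} {G H : Multigraph V} {k : ℕ} {S : Set V} {x y : V}

lemma MReach.mono {E F : Multiset (Sym2 V)} (hEF : E ≤ F) (h : MReach E x y) : MReach F x y :=
  Relation.ReflTransGen.mono (fun _ _ => Multiset.mem_of_le hEF) _ _ h

open Classical in
lemma le_lam_iff :
    (k : ℕ∞) ≤ G.lam x y ↔
      ∀ F : Multiset (Sym2 V), ¬ (G.deleteEdges F).Reachable x y → k ≤ Multiset.card F := by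
  refine ⟨fun h F hF => ?_, fun h => le_sInf ?_⟩
  · have hcut : ¬ (G.deleteEdges (G.edges ∩ F)).Reachable x y := fun hr => hF <| by
      have hsub : G.edges - G.edges ∩ F = G.edges - F :=
        tsub_eq_of_eq_add (Multiset.sub_add_inter G.edges F).symm
      exact MReach.mono hsub.le hr
    have hlam : G.lam x y ≤ Multiset.card (G.edges ∩ F) :=
      sInf_le ⟨_, Multiset.inter_le_left, hcut, rfl⟩
    exact (Nat.cast_le.1 (h.trans hlam)).trans (Multiset.card_le_card Multiset.inter_le_right)
  · rintro _ ⟨F, -, hF, rfl⟩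
    exact Nat.cast_le.2 (h F hF)

lemma isKEdgeConnectedSet_singleton (G : Multigraph V) (k : ℕ) (v : V) :
    G.IsKEdgeConnectedSet k {v} := by
  refine ⟨Set.singleton_nonempty v, ?_⟩
  rintro _ rfl _ rfl
  exact le_lam_iff.2 fun F hF => (hF .refl).elim

open Classical in
lemma IsKEdgeConnectedSet.of_induce_edges_le_add {D : Multiset (Sym2 V)}
    (hG : G.IsKEdgeConnectedSet (k + Multiset.card D) S)
    (hle : (G.induce S).edges ≤ (H.induce S).edges + D) : H.IsKEdgeConnectedSet k S := by
  refine ⟨hG.1, fun x hx y hy => le_lam_iff.2 fun F hF => ?_⟩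
  have hsub : (G.induce S).edges - (F + D) ≤ (H.induce S).edges - F := by
    rw [tsub_le_iff_right, ← add_assoc]
    exact hle.trans (add_le_add_left le_tsub_add D)
  have hcard := le_lam_iff.1 (hG.2 x hx y hy) (F + D) fun hr => hF (MReach.mono hsub hr)
  rw [Multiset.card_add] at hcard
  exact Nat.le_of_add_le_add_right hcard

lemma IsKEdgeConnectedSet.le_card_edges (hG : G.IsKEdgeConnectedSet k S) (hS : S.Nontrivial) :
    k ≤ Multiset.card (G.induce S).edges := by
  classical
  obtain ⟨x, hx, y, hy, hxy⟩ := hS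
  refine le_lam_iff.1 (hG.2 x hx y hy) _ fun hr => ?_
  obtain h | ⟨z, hz, -⟩ := Relation.ReflTransGen.cases_head hr
  · exact hxy h
  · simp [deleteEdges] at hz

lemma IsKEdgeConnectedSet.exists_isMaxKEdgeConnectedSubgraph [Finite V]
    (hS : G.IsKEdgeConnectedSet k S) : ∃ T, S ⊆ T ∧ G.IsMaxKEdgeConnectedSubgraph k T := by
  obtain ⟨T, hST, hT⟩ := (Set.toFinite {T | G.IsKEdgeConnectedSet k T}).exists_le_maximal hS
  exact ⟨T, hST, hT.prop, fun U hTU hU => (hT.eq_of_subset hU hTU).symm⟩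

end EdgeConnectivity

section Sparsity

variable {V : Type u} {G : Multigraph V} {k : ℕ} {S : Set V}

lemma induce_edges_eq_zero (G : Multigraph V) (hS : S.Subsingleton) : (G.induce S).edges = 0 := by
  classical
  refine Multiset.eq_zero_of_forall_notMem fun f hf => (G.induce S).loopless f hf ?_
  have hfS := (Multiset.mem_filter.1 hf).2
  induction f with
  | _ a b => exact hS (hfS a (Sym2.mem_mk_left a b)) (hfS b (Sym2.mem_mk_right a b))

lemma exists_cut_of_not_isKEdgeConnectedSet (hS : S.Nonempty) (h : ¬ G.IsKEdgeConnectedSet k S) :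
    ∃ A ⊂ S, A.Nonempty ∧ ∃ F : Multiset (Sym2 V), Multiset.card F < k ∧
      (G.induce S).edges ≤ (G.induce A).edges + (G.induce (S \ A)).edges + F := by
  classical
  simp only [IsKEdgeConnectedSet, hS, true_and, le_lam_iff] at h
  push Not at h
  obtain ⟨x, hx, y, hy, F, hF, hFk⟩ := h
  let A : Set V := {v ∈ S | ((G.induce S).deleteEdges F).Reachable x v}
  refine ⟨A, ⟨Set.sep_subset _ _, fun hSA => hF (hSA hy).2⟩, ⟨x, hx, .refl⟩, F, hFk, ?_⟩
  have hstep {a b : V} (hab : s(a, b) ∈ (G.induce S).edges - F) (ha : a ∈ A) (hb : b ∈ S) :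
      b ∈ A := ⟨hb, ha.2.tail hab⟩
  have hside : ∀ f ∈ (G.induce S).edges - F, (¬ ∀ v ∈ f, v ∈ A) → ∀ v ∈ f, v ∈ S \ A := by
    intro f hf hfA
    have hfS := (Multiset.mem_filter.1 (Multiset.mem_of_le tsub_le_self hf)).2
    induction f with
    | _ a b =>
      have hba := hstep (Sym2.eq_swap ▸ hf : s(b, a) ∈ _)
      have hab := hstep hf
      simp only [Sym2.mem_iff, forall_eq_or_imp, forall_eq] at hfA hfS ⊢
      simp only [Set.mem_sdiff]
      tauto
  have hle : (G.induce S).edges - F ≤ G.edges :=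
    tsub_le_self.trans (Multiset.filter_le _ _)
  rw [← tsub_le_iff_right, ← Multiset.filter_add_not (fun f => ∀ v ∈ f, v ∈ A) (_ - F)]
  refine add_le_add (Multiset.filter_le_filter _ hle) (Multiset.le_filter.2 ⟨?_, fun f hf => ?_⟩)
  · exact (Multiset.filter_le _ _).trans hle
  · exact hside f (Multiset.mem_filter.1 hf).1 (Multiset.mem_filter.1 hf).2

theorem card_induce_edges_le_mul_ncard_sub_one (hS : S.Finite)
    (h : ∀ T ⊆ S, T.Nontrivial → ¬ G.IsKEdgeConnectedSet (k + 1) T) :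
    Multiset.card (G.induce S).edges ≤ k * (S.ncard - 1) := by
  induction hn : S.ncard using Nat.strong_induction_on generalizing S with
  | _ n ih =>
  subst hn
  obtain hsub | hnt := S.subsingleton_or_nontrivial
  · simp [induce_edges_eq_zero G hsub]
  obtain ⟨A, hAS, hA, F, hF, hle⟩ :=
    exists_cut_of_not_isKEdgeConnectedSet hnt.nonempty (h S subset_rfl hnt)
  have hB : (S \ A).Nonempty := Set.nonempty_of_ssubset hAS
  have hcard : (S \ A).ncard + A.ncard = S.ncard :=
    Set.ncard_sdiff_add_ncard_of_subset hAS.subset hS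
  have hA_pos : 0 < A.ncard := (Set.ncard_pos (hS.subset hAS.subset)).2 hA
  have hB_pos : 0 < (S \ A).ncard := (Set.ncard_pos hS.sdiff).2 hB
  have ihA := ih A.ncard (by omega) (hS.subset hAS.subset)
    (fun T hT => h T (hT.trans hAS.subset)) rfl
  have ihB := ih (S \ A).ncard (by omega) hS.sdiff (fun T hT => h T (hT.trans Set.sdiff_subset)) rfl
  calc Multiset.card (G.induce S).edges
      ≤ Multiset.card (G.induce A).edges + Multiset.card (G.induce (S \ A)).edges
          + Multiset.card F := by
        simpa only [Multiset.card_add] using Multiset.card_le_card hle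
    _ ≤ k * (A.ncard - 1) + k * ((S \ A).ncard - 1) + k := by gcongr; omega
    _ = k * ((A.ncard - 1) + ((S \ A).ncard - 1) + 1) := by ring
    _ = k * (S.ncard - 1) := by congr 1; omega

end Sparsity

section Interconnection

variable {V : Type u} {k : ℕ}

/-- An edge `f` is an interconnection of `G` if its endpoints lie in different maximal
`k`-edge-connected subgraphs. As the latter partition the vertices, this is encoded as: no maximal
`k`-edge-connected subgraph contains all endpoints of `f`. -/
def IsInterconnection (G : Multigraph V) (k : ℕ) (f : Sym2 V) : Prop :=
  ¬ ∃ S : Set V, G.IsMaxKEdgeConnectedSubgraph k S ∧ ∀ v ∈ f, v ∈ S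

lemma IsInterconnection.not_isKEdgeConnectedSet [Finite V] {G : Multigraph V} {f : Sym2 V}
    {S : Set V} (hf : G.IsInterconnection k f) (hfS : ∀ v ∈ f, v ∈ S) :
    ¬ G.IsKEdgeConnectedSet k S := by
  intro hS
  obtain ⟨T, hST, hT⟩ := hS.exists_isMaxKEdgeConnectedSubgraph
  exact hf ⟨T, hT, fun v hv => hST (hfS v hv)⟩

lemma IsInterconnection.not_isDiag [Finite V] {G : Multigraph V} {f : Sym2 V}
    (hf : G.IsInterconnection k f) : ¬ f.IsDiag := by
  induction f with
  | _ a b =>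
    rintro (rfl : a = b)
    exact hf.not_isKEdgeConnectedSet (S := {a}) (by simp) (G.isKEdgeConnectedSet_singleton k a)

lemma induce_ofEdges_map_edges {ι : Type*} (e : ι → Sym2 V) (I : Finset ι) (S : Set V)
    [DecidablePred fun i => ¬ (e i).IsDiag ∧ ∀ v ∈ e i, v ∈ S] :
    ((ofEdges (I.val.map e)).induce S).edges =
      (I.filter fun i => ¬ (e i).IsDiag ∧ ∀ v ∈ e i, v ∈ S).val.map e := by
  simp only [induce, ofEdges, Multiset.filter_filter, Multiset.filter_map, Finset.filter_val]
  congr! 2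
  exact and_comm

lemma graphOfPrefix_eq_ofEdges {m : ℕ} (e : Fin m → Sym2 V) (i : Fin m) :
    graphOfPrefix e i = ofEdges ((Finset.Iio i).val.map e) := by
  have hIio : (((List.finRange m).take i : List (Fin m)) : Multiset (Fin m)) =
      (Finset.Iio i).val := by
    refine (Multiset.Nodup.ext ?_ (Finset.nodup _)).2 fun j => ?_
    · exact (List.take_sublist _ _).nodup (List.nodup_finRange m)
    · simp [List.mem_take_iff_getElem, Fin.ext_iff]
  rw [graphOfPrefix, List.ofFn_eq_map, ← List.map_take, ← Multiset.map_coe, hIio]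

theorem not_isKEdgeConnectedSet_of_isInterconnection [Finite V] {m : ℕ} {e : Fin m → Sym2 V}
    {I : Finset (Fin m)} (hI : ∀ i ∈ I, (graphOfPrefix e i).IsInterconnection k (e i))
    {S : Set V} (hS : S.Nontrivial) :
    ¬ (ofEdges (I.val.map e)).IsKEdgeConnectedSet (k + 1) S := by
  classical
  intro hconn
  set J := I.filter fun i => ¬ (e i).IsDiag ∧ ∀ v ∈ e i, v ∈ S
  have hJ_edges : ((ofEdges (I.val.map e)).induce S).edges = J.val.map e :=
    induce_ofEdges_map_edges e I S
  have hJ_card : k + 1 ≤ J.card := by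
    simpa only [hJ_edges, Multiset.card_map, Finset.card_val] using hconn.le_card_edges hS
  obtain ⟨i, hiJ, hi_last⟩ := J.exists_max_image id (Finset.card_pos.1 (by omega))
  have hi := Finset.mem_filter.1 hiJ
  refine (hI i hi.1).not_isKEdgeConnectedSet hi.2.2 (.of_induce_edges_le_add (D := {e i}) hconn ?_)
  rw [hJ_edges, graphOfPrefix_eq_ofEdges, induce_ofEdges_map_edges, ← Multiset.map_singleton e i,
    ← Multiset.map_add]
  refine Multiset.map_le_map ((Multiset.le_iff_subset J.nodup).2 fun j hj => ?_)
  have hji : j ≤ i := hi_last j hj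
  have hjJ := Finset.mem_filter.1 hj
  obtain hlt | rfl := hji.lt_or_eq
  · simpa [hlt, hjJ.2.1] using Or.inl hjJ.2.2
  · simp

end Interconnection

end Multigraph

open Multigraph in
theorem count_interconnection_insertions_le_general {V : Type u} [Fintype V]
    (k : ℕ) {m : ℕ} (e : Fin m → Sym2 V) :
    {i : Fin m | ¬ ∃ S : Set V,
        (Multigraph.graphOfPrefix e (i : ℕ)).IsMaxKEdgeConnectedSubgraph k S ∧
          ∀ v ∈ e i, v ∈ S}.ncard ≤ k * (Fintype.card V - 1) := by
  classical
  let I : Finset (Fin m) := {i | (graphOfPrefix e i).IsInterconnection k (e i)}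
  have hI : ∀ i ∈ I, (graphOfPrefix e i).IsInterconnection k (e i) := by simp [I]
  have hI_edges : ((ofEdges (I.val.map e)).induce Set.univ).edges = I.val.map e := by
    rw [induce_ofEdges_map_edges, Finset.filter_true_of_mem fun i hi => ?_]
    exact ⟨(hI i hi).not_isDiag, fun v _ => Set.mem_univ v⟩
  calc {i : Fin m | (graphOfPrefix e i).IsInterconnection k (e i)}.ncard
      = Multiset.card ((ofEdges (I.val.map e)).induce Set.univ).edges := by
        rw [hI_edges, Multiset.card_map, Finset.card_val, ← Set.ncard_coe_finset,
          Finset.coe_filter_univ]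
    _ ≤ k * ((Set.univ : Set V).ncard - 1) :=
        card_induce_edges_le_mul_ncard_sub_one Set.finite_univ fun _ _ hT =>
          not_isKEdgeConnectedSet_of_isInterconnection hI hT
    _ = k * (Fintype.card V - 1) := by rw [Set.ncard_univ, Nat.card_eq_fintype_card]

theorem count_interconnection_insertions_le {V : Type u} [Fintype V]
    (k : ℕ) (hk : 3 ≤ k) {m : ℕ} (e : Fin m → Sym2 V)
    (he : ∀ i : Fin m, ¬ (e i).IsDiag) :
    {i : Fin m | ¬ ∃ S : Set V,
        (Multigraph.graphOfPrefix e (i : ℕ)).IsMaxKEdgeConnectedSubgraph k S ∧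
          ∀ v ∈ e i, v ∈ S}.ncard ≤ k * (Fintype.card V - 1) := by
  exact count_interconnection_insertions_le_general k e
end

section
/- Let G be a multigraph with n vertices, let k ≥ 1, and let E' ⊆ E(G) be a set of edges of G that contains all the k-interconnection edges of G. Let F₁, …, F_k be a forest decomposition of G ∖ E' with k forests, and let F = F₁ ∪ … ∪ F_k. Then the spanning subgraph of G with edge set F ∪ E' has at most k(n − 1) + |E'| edges and has exactly the same maximal k-edge-connected subgraphs (the same vertex sets) as G; that is, F ∪ E' is a k-certificate of G. -/
/-!
Let `e(A, B)` count the edges joining `A` to `B`. Since `lam` is a minimum cut size, `G[S]` is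
`k`-edge-connected iff `k ≤ e(S ∩ X, S \ X)` whenever `X` separates two vertices of `S`. If an
edge crossing `X` is left over by all `k` forests of a decomposition, its endpoints are connected
in each of the forests, so each forest crosses `X`: the forests retain at least
`min k (e(X, Xᶜ))` of the edges crossing `X`.

A maximal `k`-edge-connected `S` is a union of components of `G ∖ E'`, because no interconnection
edge survives there. Hence the edges of `G ∖ E'` joining `S ∩ X` to `S \ X` form the full cut of
`S ∩ X` in `G ∖ E'`, and the forests together with `E'` keep `S` `k`-edge-connected.
-/

universe u

namespace Multigraph

variable {V : Type u}

/-- `e` is a `k`-interconnection edge: its two endpoints lie in different maximal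
`k`-edge-connected subgraphs of `G`. -/
def IsInterconnectionEdge (G : Multigraph V) (k : ℕ) (e : Sym2 V) : Prop :=
  ¬ ∃ S : Set V, G.IsMaxKEdgeConnectedSubgraph k S ∧ ∀ v ∈ e, v ∈ S

open Classical in
/-- The multiset of `k`-interconnection edges of `G`. -/
noncomputable def interEdges (G : Multigraph V) (k : ℕ) : Multiset (Sym2 V) :=
  G.edges.filter (G.IsInterconnectionEdge k)

open Classical in
/-- A multiset of edges is a forest: no repeated edges, and every edge is a bridge. -/
def MIsForest (F : Multiset (Sym2 V)) : Prop :=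
  F.Nodup ∧ ∀ e ∈ F, ∀ x y : V, e = s(x, y) → ¬ MReach (F.erase e) x y

/-- `F` is a spanning forest of the edge multiset `D`: a forest contained in `D` with the
same reachability relation. -/
def MIsSpanningForestOf (D F : Multiset (Sym2 V)) : Prop :=
  F ≤ D ∧ MIsForest F ∧ ∀ x y : V, MReach F x y ↔ MReach D x y

open Classical in
/-- `F 0, …, F (k-1)` is a forest decomposition of `D` with `k` forests:
`F i` is a spanning forest of `D` minus the previous forests. -/
def IsForestDecomposition (D : Multigraph V) (k : ℕ) (F : Fin k → Multiset (Sym2 V)) : Prop :=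
  ∀ i : Fin k,
    MIsSpanningForestOf (D.edges - ∑ j ∈ Finset.univ.filter (· < i), F j) (F i)

end Multigraph

namespace Multigraph

variable {V : Type u}

section EdgeCount

/-- `e` has one endpoint in `A` and the other in `B`. -/
def Joins (A B : Set V) (e : Sym2 V) : Prop :=
  ∃ a ∈ A, ∃ b ∈ B, e = s(a, b)

open Classical in
/-- The number `e(A, B)` of edges in the multiset `F`, counted with multiplicity, that join `A` to
`B`. The size of the cut of `F` determined by `X` is `edgeCount F X Xᶜ`. -/
noncomputable def edgeCount (F : Multiset (Sym2 V)) (A B : Set V) : ℕ :=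
  F.countP (Joins A B)

variable {F F' : Multiset (Sym2 V)} {A A' B B' : Set V}

lemma Joins.mono (hA : A ⊆ A') (hB : B ⊆ B') {e : Sym2 V} : Joins A B e → Joins A' B' e :=
  fun ⟨a, ha, b, hb, he⟩ => ⟨a, hA ha, b, hB hb, he⟩

lemma edgeCount_mono_left (h : F ≤ F') : edgeCount F A B ≤ edgeCount F' A B := by
  classical
  exact Multiset.countP_le_of_le _ h

lemma edgeCount_mono (hA : A ⊆ A') (hB : B ⊆ B') : edgeCount F A B ≤ edgeCount F A' B' := by
  classical
  simp only [edgeCount, Multiset.countP_eq_card_filter]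
  exact Multiset.card_le_card (Multiset.monotone_filter_right F fun _ => Joins.mono hA hB)

lemma edgeCount_le_card : edgeCount F A B ≤ Multiset.card F := by
  classical
  exact Multiset.countP_le_card _ F

lemma edgeCount_add : edgeCount (F + F') A B = edgeCount F A B + edgeCount F' A B := by
  classical
  exact Multiset.countP_add _ F F'

lemma edgeCount_sum {ι : Type*} (s : Finset ι) (F : ι → Multiset (Sym2 V)) :
    edgeCount (∑ i ∈ s, F i) A B = ∑ i ∈ s, edgeCount (F i) A B := by
  classical
  exact map_sum (Multiset.countPAddMonoidHom (Joins A B)) F s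

lemma edgeCount_deleteEdges_add {G : Multigraph V} (h : F ≤ G.edges) :
    edgeCount (G.deleteEdges F).edges A B + edgeCount F A B = edgeCount G.edges A B := by
  classical
  rw [← edgeCount_add, deleteEdges, tsub_add_cancel_of_le h]

lemma edgeCount_pos_iff : 0 < edgeCount F A B ↔ ∃ a ∈ A, ∃ b ∈ B, s(a, b) ∈ F := by
  classical
  rw [edgeCount, Multiset.countP_pos]
  constructor
  · rintro ⟨_, he, a, ha, b, hb, rfl⟩
    exact ⟨a, ha, b, hb, he⟩
  · rintro ⟨a, ha, b, hb, he⟩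
    exact ⟨_, he, a, ha, b, hb, rfl⟩

lemma edgeCount_inter_compl_of_closed {S : Set V}
    (hS : ∀ a b, s(a, b) ∈ F → a ∈ S → b ∈ S) (X : Set V) :
    edgeCount F (S ∩ X) (S ∩ X)ᶜ = edgeCount F (S ∩ X) (S \ X) := by
  classical
  refine Multiset.countP_congr rfl fun e he => propext ⟨?_, Joins.mono subset_rfl fun b hb h => ?_⟩
  · rintro ⟨a, ha, b, hb, rfl⟩
    have hbS : b ∈ S := hS a b he ha.1
    exact ⟨a, ha, b, ⟨hbS, fun hbX => hb ⟨hbS, hbX⟩⟩, rfl⟩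
  · exact hb.2 h.2

lemma edgeCount_induce (G : Multigraph V) (S A B : Set V) :
    edgeCount (G.induce S).edges A B = edgeCount G.edges (S ∩ A) (S ∩ B) := by
  classical
  simp only [edgeCount, induce, Multiset.countP_filter]
  refine Multiset.countP_congr rfl fun e _ => propext ⟨?_, ?_⟩
  · rintro ⟨⟨a, ha, b, hb, rfl⟩, hS⟩
    exact ⟨a, ⟨hS a (Sym2.mem_mk_left a b), ha⟩, b, ⟨hS b (Sym2.mem_mk_right a b), hb⟩, rfl⟩
  · rintro ⟨a, ha, b, hb, rfl⟩
    exact ⟨⟨a, ha.2, b, hb.2, rfl⟩, Sym2.ball.2 ⟨ha.1, hb.1⟩⟩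

end EdgeCount

section EdgeConnectivity

variable {G H : Multigraph V} {k : ℕ} {S T : Set V} {z : V}

lemma edges_ofEdges_of_le {C : Multiset (Sym2 V)} (hC : C ≤ G.edges) : (ofEdges C).edges = C := by
  classical
  exact Multiset.filter_eq_self.2 fun e he => G.loopless e (Multiset.mem_of_le hC he)

lemma mreach_iff_forall_edgeCount_pos {F : Multiset (Sym2 V)} {x y : V} :
    MReach F x y ↔ ∀ X : Set V, x ∈ X → y ∉ X → 0 < edgeCount F X Xᶜ := by
  constructor
  · intro h X hx hy
    induction h with
    | refl => exact absurd hx hy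
    | @tail b c _ hbc ih =>
      by_cases hb : b ∈ X
      · exact edgeCount_pos_iff.2 ⟨b, hb, c, hy, hbc⟩
      · exact ih hb
  · intro h
    by_contra hxy
    obtain ⟨a, ha, b, hb, hab⟩ :=
      edgeCount_pos_iff.1 (h {z | MReach F x z} Relation.ReflTransGen.refl hxy)
    exact hb (Relation.ReflTransGen.tail ha hab)

lemma le_lam_iff_s9 {x y : V} :
    (k : ℕ∞) ≤ G.lam x y ↔ ∀ X : Set V, x ∈ X → y ∉ X → k ≤ edgeCount G.edges X Xᶜ := by
  classical
  constructor
  · intro h X hx hy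
    let C := G.edges.filter (Joins X Xᶜ)
    have hcard : Multiset.card C = edgeCount G.edges X Xᶜ := by
      rw [edgeCount, Multiset.countP_eq_card_filter]
    have hsep : ¬ (G.deleteEdges C).Reachable x y := fun hxy => by
      obtain ⟨a, ha, b, hb, hab⟩ :=
        edgeCount_pos_iff.1 (mreach_iff_forall_edgeCount_pos.1 hxy X hx hy)
      simp only [deleteEdges, C, Multiset.sub_filter_eq_filter_not, Multiset.mem_filter] at hab
      exact hab.2 ⟨a, ha, b, hb, rfl⟩
    have hlam : G.lam x y ≤ Multiset.card C := sInf_le ⟨C, Multiset.filter_le _ _, hsep, rfl⟩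
    rw [← hcard]
    exact_mod_cast h.trans hlam
  · intro h
    refine le_sInf ?_
    rintro _ ⟨C, hC, hsep, rfl⟩
    obtain ⟨X, hx, hy, hX⟩ :
        ∃ X : Set V, x ∈ X ∧ y ∉ X ∧ edgeCount (G.deleteEdges C).edges X Xᶜ = 0 := by
      simpa [Reachable, mreach_iff_forall_edgeCount_pos] using hsep
    have hle : k ≤ Multiset.card C := calc
      k ≤ edgeCount G.edges X Xᶜ := h X hx hy
      _ = edgeCount C X Xᶜ := by rw [← edgeCount_deleteEdges_add hC, hX, zero_add]
      _ ≤ Multiset.card C := edgeCount_le_card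
    exact_mod_cast hle

lemma isKEdgeConnectedSet_iff :
    G.IsKEdgeConnectedSet k S ↔ S.Nonempty ∧
      ∀ X : Set V, (S ∩ X).Nonempty → (S \ X).Nonempty → k ≤ edgeCount G.edges (S ∩ X) (S \ X) := by
  simp only [IsKEdgeConnectedSet, le_lam_iff_s9, edgeCount_induce, ← Set.sdiff_eq]
  exact and_congr_right fun _ =>
    ⟨fun h X ⟨x, hxS, hx⟩ ⟨y, hyS, hy⟩ => h x hxS y hyS X hx hy,
      fun h x hxS y hyS X hx hy => h X ⟨x, hxS, hx⟩ ⟨y, hyS, hy⟩⟩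

lemma IsKEdgeConnectedSet.mono (hHG : H.edges ≤ G.edges) (hS : H.IsKEdgeConnectedSet k S) :
    G.IsKEdgeConnectedSet k S := by
  rw [isKEdgeConnectedSet_iff] at hS ⊢
  exact ⟨hS.1, fun X hX hX' => (hS.2 X hX hX').trans (edgeCount_mono_left hHG)⟩

lemma IsKEdgeConnectedSet.sUnion {C : Set (Set V)} (hC : C.Nonempty)
    (h : ∀ S ∈ C, G.IsKEdgeConnectedSet k S) (hz : ∀ S ∈ C, z ∈ S) :
    G.IsKEdgeConnectedSet k (⋃₀ C) := by
  obtain ⟨U, hU⟩ := hC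
  refine isKEdgeConnectedSet_iff.2 ⟨⟨z, U, hU, hz U hU⟩, ?_⟩
  have le_of_separates : ∀ S ∈ C, ∀ X : Set V, (S ∩ X).Nonempty → (S \ X).Nonempty →
      k ≤ edgeCount G.edges (⋃₀ C ∩ X) (⋃₀ C \ X) := fun S hS X hX hX' =>
    have hSC : S ⊆ ⋃₀ C := Set.subset_sUnion_of_mem hS
    ((isKEdgeConnectedSet_iff.1 (h S hS)).2 X hX hX').trans
      (edgeCount_mono (Set.inter_subset_inter_left X hSC) (Set.sdiff_subset_sdiff_left hSC))
  rintro X ⟨x, ⟨S, hS, hxS⟩, hx⟩ ⟨y, ⟨T, hT, hyT⟩, hy⟩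
  by_cases hzX : z ∈ X
  · exact le_of_separates T hT X ⟨z, hz T hT, hzX⟩ ⟨y, hyT, hy⟩
  · exact le_of_separates S hS X ⟨x, hxS, hx⟩ ⟨z, hz S hS, hzX⟩

lemma IsKEdgeConnectedSet.exists_isMax_superset (hS : G.IsKEdgeConnectedSet k S) :
    ∃ T, S ⊆ T ∧ G.IsMaxKEdgeConnectedSubgraph k T := by
  obtain ⟨z, hz⟩ := hS.1
  let C : Set (Set V) := {U | G.IsKEdgeConnectedSet k U ∧ z ∈ U}
  have hSC : S ⊆ ⋃₀ C := Set.subset_sUnion_of_mem (show S ∈ C from ⟨hS, hz⟩)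
  exact ⟨⋃₀ C, hSC, .sUnion ⟨S, hS, hz⟩ (fun U hU => hU.1) (fun U hU => hU.2),
    fun W hCW hW => (Set.subset_sUnion_of_mem (show W ∈ C from ⟨hW, hCW (hSC hz)⟩)).antisymm hCW⟩

lemma IsMaxKEdgeConnectedSubgraph.subset_of_mem (hS : G.IsMaxKEdgeConnectedSubgraph k S)
    (hT : G.IsKEdgeConnectedSet k T) (hzS : z ∈ S) (hzT : z ∈ T) : T ⊆ S := by
  have hST : G.IsKEdgeConnectedSet k (⋃₀ {S, T}) :=
    .sUnion (Set.insert_nonempty S {T}) (by simp [hS.1, hT]) (z := z) (by simp [hzS, hzT])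
  rw [Set.sUnion_pair] at hST
  exact Set.union_eq_left.1 (hS.2 _ Set.subset_union_left hST)

lemma isMaxKEdgeConnectedSubgraph_iff_of_le (hHG : H.edges ≤ G.edges)
    (h : ∀ T, G.IsMaxKEdgeConnectedSubgraph k T → H.IsKEdgeConnectedSet k T) :
    H.IsMaxKEdgeConnectedSubgraph k S ↔ G.IsMaxKEdgeConnectedSubgraph k S := by
  constructor
  · intro hS
    obtain ⟨T, hST, hT⟩ := (hS.1.mono hHG).exists_isMax_superset
    exact hS.2 T hST (h T hT) ▸ hT
  · exact fun hS => ⟨h S hS, fun T hST hT => hS.2 T hST (hT.mono hHG)⟩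

lemma IsMaxKEdgeConnectedSubgraph.mem_of_mem_deleteEdges
    (hS : G.IsMaxKEdgeConnectedSubgraph k S) {E' : Multiset (Sym2 V)}
    (hinter : G.interEdges k ≤ E') {a b : V} (hab : s(a, b) ∈ (G.deleteEdges E').edges)
    (ha : a ∈ S) : b ∈ S := by
  classical
  have hnot : ¬ G.IsInterconnectionEdge k s(a, b) := fun hi => by
    have hcount := Multiset.count_le_of_le s(a, b) hinter
    rw [interEdges, Multiset.count_filter_of_pos hi] at hcount
    exact (Multiset.mem_sub.1 hab).not_ge hcount
  obtain ⟨T, hT, habT⟩ := not_not.1 hnot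
  exact hS.subset_of_mem hT.1 ha (habT a (Sym2.mem_mk_left a b)) (habT b (Sym2.mem_mk_right a b))

end EdgeConnectivity

section Forests

lemma card_edgeFinset_lt_card_of_isAcyclic [Fintype V] [Nonempty V] {A : SimpleGraph V}
    [Fintype A.edgeSet] (hA : A.IsAcyclic) : A.edgeFinset.card < Fintype.card V := by
  classical
  obtain ⟨T, hAT, -, hT⟩ :=
    SimpleGraph.connected_top.exists_isTree_le_of_le_of_isAcyclic (le_top : A ≤ ⊤) hA
  rw [← hT.card_edgeFinset, Nat.lt_succ_iff]
  exact Finset.card_le_card (SimpleGraph.edgeFinset_mono hAT)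

variable {F : Multiset (Sym2 V)}

lemma MIsForest.not_isDiag (hF : MIsForest F) {e : Sym2 V} (he : e ∈ F) : ¬ e.IsDiag := by
  induction e with
  | _ x y =>
    intro hxy
    obtain rfl : x = y := hxy
    exact hF.2 _ he x x rfl Relation.ReflTransGen.refl

lemma MIsForest.isAcyclic_fromEdgeSet (hF : MIsForest F) :
    (SimpleGraph.fromEdgeSet {e | e ∈ F}).IsAcyclic := by
  classical
  rw [SimpleGraph.isAcyclic_iff_forall_isBridge]
  intro e he
  induction e with
  | _ x y =>
    rw [SimpleGraph.isBridge_iff, SimpleGraph.reachable_iff_reflTransGen]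
    refine fun hxy => hF.2 _ he.1 x y rfl (Relation.ReflTransGen.mono (fun a b hab => ?_) _ _ hxy)
    rw [SimpleGraph.deleteEdges_adj, SimpleGraph.fromEdgeSet_adj] at hab
    exact (Multiset.mem_erase_of_ne hab.2).2 hab.1.1

lemma MIsForest.card_le (hF : MIsForest F) : (Multiset.card F : ℕ∞) ≤ ENat.card V - 1 := by
  classical
  rcases finite_or_infinite V with _ | _
  · have := Fintype.ofFinite V
    rcases isEmpty_or_nonempty V with _ | _
    · simp [Multiset.eq_zero_of_forall_notMem fun e : Sym2 V => isEmptyElim e]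
    · have hedges : (SimpleGraph.fromEdgeSet {e | e ∈ F}).edgeFinset = F.toFinset := by
        ext e
        simpa using fun he => hF.not_isDiag he
      have hlt := card_edgeFinset_lt_card_of_isAcyclic hF.isAcyclic_fromEdgeSet
      rw [hedges, Multiset.toFinset_card_of_nodup hF.1] at hlt
      rw [ENat.card_eq_coe_fintype_card]
      exact_mod_cast Nat.le_sub_one_of_lt hlt
  · simp [ENat.card_eq_top_of_infinite]

end Forests

section ForestDecomposition

variable {D : Multigraph V} {k : ℕ} {F : Fin k → Multiset (Sym2 V)}

lemma IsForestDecomposition.sum_le (hF : D.IsForestDecomposition k F) (s : Finset (Fin k)) :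
    ∑ i ∈ s, F i ≤ D.edges := by
  classical
  induction s using Finset.induction_on_max with
  | empty => simp
  | insert i s hi ih =>
    have hs : ∑ j ∈ s, F j ≤ ∑ j ∈ Finset.univ.filter (· < i), F j :=
      Finset.sum_le_sum_of_subset fun j hj => by simp [hi j hj]
    rw [Finset.sum_insert fun h => (hi i h).false, ← le_tsub_iff_right ih]
    exact (hF i).1.trans (tsub_le_tsub_left hs _)

lemma IsForestDecomposition.card_sum_le (hF : D.IsForestDecomposition k F) :
    (Multiset.card (∑ i, F i) : ℕ∞) ≤ k * (ENat.card V - 1) := by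
  rw [Multiset.card_sum, Nat.cast_sum]
  simpa using Finset.sum_le_card_nsmul Finset.univ _ _ fun i _ => (hF i).2.1.card_le

lemma IsForestDecomposition.mreach_of_mem_deleteEdges_sum (hF : D.IsForestDecomposition k F)
    {a b : V} (hab : s(a, b) ∈ (D.deleteEdges (∑ i, F i)).edges) (i : Fin k) :
    MReach (F i) a b := by
  classical
  refine ((hF i).2.2 a b).2 (Relation.ReflTransGen.single (Multiset.mem_of_le ?_ hab))
  exact tsub_le_tsub_left (Finset.sum_le_sum_of_subset (Finset.filter_subset _ _)) _

lemma IsForestDecomposition.min_le_edgeCount (hF : D.IsForestDecomposition k F) (X : Set V) :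
    min k (edgeCount D.edges X Xᶜ) ≤ edgeCount (∑ i, F i) X Xᶜ := by
  have hsplit := edgeCount_deleteEdges_add (A := X) (B := Xᶜ) (hF.sum_le Finset.univ)
  rcases Nat.eq_zero_or_pos (edgeCount (D.deleteEdges (∑ i, F i)).edges X Xᶜ) with hzero | hpos
  · exact min_le_of_right_le (by omega)
  · obtain ⟨a, ha, b, hb, hab⟩ := edgeCount_pos_iff.1 hpos
    have hcross : ∀ i, 1 ≤ edgeCount (F i) X Xᶜ := fun i =>
      mreach_iff_forall_edgeCount_pos.1 (hF.mreach_of_mem_deleteEdges_sum hab i) X ha hb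
    rw [edgeCount_sum]
    refine min_le_of_left_le ?_
    simpa using Finset.card_nsmul_le_sum Finset.univ _ 1 fun i _ => hcross i

variable {G H : Multigraph V} {E' : Multiset (Sym2 V)}

lemma IsForestDecomposition.sum_add_le (hE' : E' ≤ G.edges)
    (hF : (G.deleteEdges E').IsForestDecomposition k F) : ∑ i, F i + E' ≤ G.edges := by
  classical
  exact (le_tsub_iff_right hE').1 (hF.sum_le Finset.univ)

lemma IsMaxKEdgeConnectedSubgraph.isKEdgeConnectedSet_of_forestDecomposition {S : Set V}
    (hS : G.IsMaxKEdgeConnectedSubgraph k S) (hE' : E' ≤ G.edges) (hinter : G.interEdges k ≤ E')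
    (hF : (G.deleteEdges E').IsForestDecomposition k F) (hH : H.edges = ∑ i, F i + E') :
    H.IsKEdgeConnectedSet k S := by
  refine isKEdgeConnectedSet_iff.2 ⟨hS.1.1, fun X hX hX' => ?_⟩
  have hG : k ≤ edgeCount (G.deleteEdges E').edges (S ∩ X) (S \ X)
      + edgeCount E' (S ∩ X) (S \ X) :=
    ((isKEdgeConnectedSet_iff.1 hS.1).2 X hX hX').trans_eq (edgeCount_deleteEdges_add hE').symm
  have hclosed : ∀ a b, s(a, b) ∈ (G.deleteEdges E').edges → a ∈ S → b ∈ S := fun _ _ =>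
    hS.mem_of_mem_deleteEdges hinter
  have hcut := hF.min_le_edgeCount (S ∩ X)
  rw [edgeCount_inter_compl_of_closed hclosed, edgeCount_inter_compl_of_closed fun a b hab =>
    hclosed a b (Multiset.mem_of_le (hF.sum_le Finset.univ) hab)] at hcut
  rw [hH, edgeCount_add]
  omega

end ForestDecomposition

end Multigraph

theorem forest_decomposition_gives_certificate_general {V : Type u}
    (G : Multigraph V) (k : ℕ)
    (E' : Multiset (Sym2 V)) (hE' : E' ≤ G.edges)
    (hinter : G.interEdges k ≤ E')
    (F : Fin k → Multiset (Sym2 V))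
    (hF : (G.deleteEdges E').IsForestDecomposition k F) :
    (Multiset.card ((∑ i : Fin k, F i) + E') : ℕ∞)
        ≤ k * (ENat.card V - 1) + Multiset.card E' ∧
      ∀ S : Set V,
        (Multigraph.ofEdges ((∑ i : Fin k, F i) + E')).IsMaxKEdgeConnectedSubgraph k S ↔
          G.IsMaxKEdgeConnectedSubgraph k S := by
  have hle : ∑ i, F i + E' ≤ G.edges := hF.sum_add_le hE'
  have hH := Multigraph.edges_ofEdges_of_le hle
  constructor
  · rw [Multiset.card_add, Nat.cast_add]
    gcongr
    exact hF.card_sum_le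
  · exact fun S => Multigraph.isMaxKEdgeConnectedSubgraph_iff_of_le (hH.trans_le hle) fun T hT =>
      hT.isKEdgeConnectedSet_of_forestDecomposition hE' hinter hF hH

theorem forest_decomposition_gives_certificate {V : Type u} [Fintype V]
    (G : Multigraph V) (k : ℕ) (hk : 1 ≤ k)
    (E' : Multiset (Sym2 V)) (hE' : E' ≤ G.edges)
    (hinter : G.interEdges k ≤ E')
    (F : Fin k → Multiset (Sym2 V))
    (hF : (G.deleteEdges E').IsForestDecomposition k F) :
    Multiset.card ((∑ i : Fin k, F i) + E')
        ≤ k * (Fintype.card V - 1) + Multiset.card E' ∧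
      ∀ S : Set V,
        (Multigraph.ofEdges ((∑ i : Fin k, F i) + E')).IsMaxKEdgeConnectedSubgraph k S ↔
          G.IsMaxKEdgeConnectedSubgraph k S := by
  obtain ⟨hcard, hmax⟩ := forest_decomposition_gives_certificate_general G k E' hE' hinter F hF
  exact ⟨by rw [ENat.card_eq_coe_fintype_card] at hcard; exact_mod_cast hcard, hmax⟩
end

section
/- Let G be a multigraph, k ≥ 1, and let x, y be two vertices lying in the same maximal k-edge-connected subgraph of G. Let G' be the multigraph obtained from G by adding one new edge with endpoints x and y. Then the partition of V(G) into the vertex sets of the maximal k-edge-connected subgraphs of G' is the same as the corresponding partition for G; in particular, a newly inserted edge can change the maximal k-edge-connected subgraphs only if its endpoints lie in different maximal k-edge-connected subgraphs. -/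
universe u

namespace Multigraph

variable {V : Type u}

/-- Add one new edge with endpoints `x` and `y` (discarded if it would be a self-loop). -/
noncomputable def addEdge (G : Multigraph V) (x y : V) : Multigraph V :=
  ofEdges (s(x, y) ::ₘ G.edges)

end Multigraph

/-!
Write `G'` for `G` with the new edge `xy`, and let `S` contain `x` and `y` with `G[S]`
`k`-edge-connected. If `G'[T]` is `k`-edge-connected and `x ∈ T`, then `T` meets `S`, so
`G'[T ∪ S]` is `k`-edge-connected as well; after deleting fewer than `k` edges, a surviving copy of
the new edge can be bypassed inside `G[S]`, so `G[T ∪ S]` is itself `k`-edge-connected. If `x ∉ T`,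
the new edge is absent from `G'[T]`. Hence every `k`-edge-connected vertex set of `G'` lies in one
of `G`; those of `G` remain `k`-edge-connected in `G'`, so the maximal ones coincide.
-/

namespace Multigraph

variable {V : Type u} {G H : Multigraph V} {k : ℕ} {a b c x y : V} {S T : Set V}

theorem Reachable.mono (h : G.edges ≤ H.edges) (hab : G.Reachable a b) : H.Reachable a b :=
  Relation.ReflTransGen.mono (fun _ _ => Multiset.mem_of_le h) a b hab

theorem Reachable.symm (h : G.Reachable a b) : G.Reachable b a :=
  have : Std.Symm fun a b => s(a, b) ∈ G.edges := ⟨fun _ _ => Sym2.eq_swap ▸ id⟩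
  Relation.ReflTransGen.stdSymm.symm _ _ h

theorem Reachable.of_forall_edge (h : ∀ a b, s(a, b) ∈ G.edges → H.Reachable a b)
    (hab : G.Reachable a b) : H.Reachable a b :=
  Relation.reflTransGen_closed h a b hab

theorem deleteEdges_edges_mono (h : G.edges ≤ H.edges) (F : Multiset (Sym2 V)) :
    (G.deleteEdges F).edges ≤ (H.deleteEdges F).edges := by
  classical exact tsub_le_tsub_right h F

theorem natCast_le_lam_iff :
    (k : ℕ∞) ≤ G.lam a b ↔
      ∀ F : Multiset (Sym2 V), F.card < k → (G.deleteEdges F).Reachable a b := by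
  classical
  rw [lam, le_sInf_iff]
  constructor
  · intro h F hF
    by_contra hab
    have h_inter : (G.deleteEdges (G.edges ∩ F)).edges ≤ (G.deleteEdges F).edges :=
      tsub_le_iff_right.2 (Multiset.sub_add_inter G.edges F).ge
    have hk : k ≤ (G.edges ∩ F).card := Nat.cast_le.1 <|
      h _ ⟨G.edges ∩ F, Multiset.inter_le_left, fun hr => hab (hr.mono h_inter), rfl⟩
    exact hF.not_ge (hk.trans (Multiset.card_le_card Multiset.inter_le_right))
  · rintro h _ ⟨F, -, hab, rfl⟩
    exact Nat.cast_le.2 (not_lt.1 fun hF => hab (h F hF))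

theorem lam_mono (h : G.edges ≤ H.edges) (a b : V) : G.lam a b ≤ H.lam a b :=
  ENat.forall_natCast_le_iff_le.1 fun _ hk => natCast_le_lam_iff.2 fun F hF =>
    (natCast_le_lam_iff.1 hk F hF).mono (deleteEdges_edges_mono h F)

theorem min_lam_le_lam (a b c : V) : min (G.lam a b) (G.lam b c) ≤ G.lam a c :=
  ENat.forall_natCast_le_iff_le.1 fun _ hk => natCast_le_lam_iff.2 fun F hF =>
    (natCast_le_lam_iff.1 (le_min_iff.1 hk).1 F hF).trans
      (natCast_le_lam_iff.1 (le_min_iff.1 hk).2 F hF)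

theorem induce_edges_mono_left (h : G.edges ≤ H.edges) (S : Set V) :
    (G.induce S).edges ≤ (H.induce S).edges := by
  classical exact Multiset.filter_le_filter _ h

theorem induce_edges_mono_right (G : Multigraph V) (h : S ⊆ T) :
    (G.induce S).edges ≤ (G.induce T).edges := by
  classical exact Multiset.monotone_filter_right _ fun _ he v hv => h (he v hv)

theorem IsKEdgeConnectedSet.mono_s11 (h : (G.induce S).edges ≤ (H.induce S).edges)
    (hS : G.IsKEdgeConnectedSet k S) : H.IsKEdgeConnectedSet k S :=
  ⟨hS.1, fun a ha b hb => (hS.2 a ha b hb).trans (lam_mono h a b)⟩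

theorem IsKEdgeConnectedSet.le_lam_induce (hS : G.IsKEdgeConnectedSet k S) (hST : S ⊆ T)
    (ha : a ∈ S) (hb : b ∈ S) : (k : ℕ∞) ≤ (G.induce T).lam a b :=
  (hS.2 a ha b hb).trans (lam_mono (G.induce_edges_mono_right hST) a b)

theorem IsKEdgeConnectedSet.union (hS : G.IsKEdgeConnectedSet k S)
    (hT : G.IsKEdgeConnectedSet k T) (h : (S ∩ T).Nonempty) :
    G.IsKEdgeConnectedSet k (S ∪ T) := by
  obtain ⟨c, hcS, hcT⟩ := h
  have h_to : ∀ a ∈ S ∪ T, (k : ℕ∞) ≤ (G.induce (S ∪ T)).lam a c := by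
    rintro a (ha | ha)
    · exact hS.le_lam_induce Set.subset_union_left ha hcS
    · exact hT.le_lam_induce Set.subset_union_right ha hcT
  have h_from : ∀ b ∈ S ∪ T, (k : ℕ∞) ≤ (G.induce (S ∪ T)).lam c b := by
    rintro b (hb | hb)
    · exact hS.le_lam_induce Set.subset_union_left hcS hb
    · exact hT.le_lam_induce Set.subset_union_right hcT hb
  exact ⟨⟨c, Or.inl hcS⟩, fun a ha b hb =>
    (le_min (h_to a ha) (h_from b hb)).trans (min_lam_le_lam a c b)⟩

theorem isMaxKEdgeConnectedSubgraph_iff_maximal :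
    G.IsMaxKEdgeConnectedSubgraph k S ↔ Maximal (G.IsKEdgeConnectedSet k) S := by
  rw [maximal_iff]
  exact and_congr_right fun _ => forall_congr' fun _ => forall_comm.trans <|
    imp_congr_right fun _ => imp_congr_right fun _ => eq_comm

theorem edges_le_addEdge_edges (G : Multigraph V) (x y : V) :
    G.edges ≤ (G.addEdge x y).edges := by
  classical exact Multiset.le_filter.2 ⟨Multiset.le_cons_self _ _, G.loopless⟩

theorem addEdge_edges_le_cons (G : Multigraph V) (x y : V) :
    (G.addEdge x y).edges ≤ s(x, y) ::ₘ G.edges := by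
  classical exact Multiset.filter_le _ _

theorem induce_edges_le_cons {e : Sym2 V} (h : H.edges ≤ e ::ₘ G.edges) (S : Set V) :
    (H.induce S).edges ≤ e ::ₘ (G.induce S).edges := by
  classical
  calc
    (H.induce S).edges ≤ ({e} + G.edges).filter fun e => ∀ v ∈ e, v ∈ S :=
      Multiset.filter_le_filter _ h
    _ = ({e} : Multiset (Sym2 V)).filter (fun e => ∀ v ∈ e, v ∈ S) + (G.induce S).edges :=
      Multiset.filter_add _ _ _
    _ ≤ {e} + (G.induce S).edges := add_le_add_left (Multiset.filter_le _ _) _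

theorem deleteEdges_edges_le_cons {e : Sym2 V} (h : H.edges ≤ e ::ₘ G.edges)
    (F : Multiset (Sym2 V)) :
    (H.deleteEdges F).edges ≤ e ::ₘ (G.deleteEdges F).edges := by
  classical
  calc
    H.edges - F ≤ ({e} + G.edges) - F := tsub_le_tsub_right h F
    _ ≤ {e} + (G.edges - F) := add_tsub_le_assoc

theorem induce_edges_le_of_notMem {e : Sym2 V} (h : H.edges ≤ e ::ₘ G.edges) (hx : x ∈ e)
    (hxS : x ∉ S) : (H.induce S).edges ≤ (G.induce S).edges := by
  classical
  calc
    (H.induce S).edges ≤ (e ::ₘ G.edges).filter fun e => ∀ v ∈ e, v ∈ S :=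
      Multiset.filter_le_filter _ h
    _ = (G.induce S).edges := Multiset.filter_cons_of_neg _ fun he => hxS (he x hx)

theorem Reachable.of_edges_le_cons (hab : H.Reachable a b)
    (h : H.edges ≤ s(x, y) ::ₘ G.edges) (hxy : G.Reachable x y) : G.Reachable a b := by
  refine hab.of_forall_edge fun c d hcd => ?_
  rcases Multiset.mem_cons.1 (Multiset.mem_of_le h hcd) with h_new | h_old
  · rcases Sym2.eq_iff.1 h_new with ⟨rfl, rfl⟩ | ⟨rfl, rfl⟩
    exacts [hxy, hxy.symm]
  · exact Relation.ReflTransGen.single h_old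

theorem min_lam_le_lam_of_edges_le_cons (h : H.edges ≤ s(x, y) ::ₘ G.edges) (a b : V) :
    min (G.lam x y) (H.lam a b) ≤ G.lam a b :=
  ENat.forall_natCast_le_iff_le.1 fun _ hk => natCast_le_lam_iff.2 fun F hF =>
    (natCast_le_lam_iff.1 (le_min_iff.1 hk).2 F hF).of_edges_le_cons
      (deleteEdges_edges_le_cons h F) (natCast_le_lam_iff.1 (le_min_iff.1 hk).1 F hF)

theorem IsKEdgeConnectedSet.addEdge (hS : G.IsKEdgeConnectedSet k S) (x y : V) :
    (G.addEdge x y).IsKEdgeConnectedSet k S :=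
  hS.mono_s11 (induce_edges_mono_left (G.edges_le_addEdge_edges x y) S)

theorem IsKEdgeConnectedSet.of_addEdge_of_subset (hT : (G.addEdge x y).IsKEdgeConnectedSet k T)
    (hS : G.IsKEdgeConnectedSet k S) (hx : x ∈ S) (hy : y ∈ S) (hST : S ⊆ T) :
    G.IsKEdgeConnectedSet k T :=
  ⟨hT.1, fun a ha b hb => (le_min (hS.le_lam_induce hST hx hy) (hT.2 a ha b hb)).trans <|
    min_lam_le_lam_of_edges_le_cons (induce_edges_le_cons (G.addEdge_edges_le_cons x y) T) a b⟩

theorem IsKEdgeConnectedSet.exists_superset_of_addEdge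
    (hT : (G.addEdge x y).IsKEdgeConnectedSet k T) (hS : G.IsKEdgeConnectedSet k S)
    (hx : x ∈ S) (hy : y ∈ S) : ∃ U, T ⊆ U ∧ G.IsKEdgeConnectedSet k U := by
  by_cases hxT : x ∈ T
  · have h_union : (G.addEdge x y).IsKEdgeConnectedSet k (T ∪ S) :=
      hT.union (hS.addEdge x y) ⟨x, hxT, hx⟩
    exact ⟨T ∪ S, Set.subset_union_left,
      h_union.of_addEdge_of_subset hS hx hy Set.subset_union_right⟩
  · exact ⟨T, subset_rfl, hT.mono_s11 <|
      induce_edges_le_of_notMem (G.addEdge_edges_le_cons x y) (Sym2.mem_mk_left x y) hxT⟩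

end Multigraph

theorem addEdge_within_max_kec_preserves_partition_general {V : Type u}
    (G : Multigraph V) (k : ℕ) (x y : V)
    (hsame : ∃ S : Set V, G.IsKEdgeConnectedSet k S ∧ x ∈ S ∧ y ∈ S) (S : Set V) :
    (G.addEdge x y).IsMaxKEdgeConnectedSubgraph k S ↔ G.IsMaxKEdgeConnectedSubgraph k S := by
  obtain ⟨S₀, hS₀, hx, hy⟩ := hsame
  simp only [Multigraph.isMaxKEdgeConnectedSubgraph_iff_maximal]
  exact maximal_iff_maximal_of_imp_of_forall (fun _ hT => hT.addEdge x y)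
    fun _ hT => hT.exists_superset_of_addEdge hS₀ hx hy

theorem addEdge_within_max_kec_preserves_partition {V : Type u} [Fintype V]
    (G : Multigraph V) (k : ℕ) (hk : 1 ≤ k) (x y : V) (hxy : x ≠ y)
    (hsame : ∃ S : Set V, G.IsMaxKEdgeConnectedSubgraph k S ∧ x ∈ S ∧ y ∈ S) :
    ∀ S : Set V,
      (G.addEdge x y).IsMaxKEdgeConnectedSubgraph k S ↔
        G.IsMaxKEdgeConnectedSubgraph k S :=
  addEdge_within_max_kec_preserves_partition_general G k x y <|
    hsame.imp fun _ hS => ⟨hS.1.1, hS.2⟩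
end
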